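/- arXiv:1412.5625 — 3 statements merged into one kernel-verified Lean document; each statement's English description precedes it below -/
import Mathlib

section
/- Let H = diag(1,1,−1,−1) ∈ M₄(ℂ) and let X be the block matrix [[0,A],[0,0]] with A = [[x₁,x₂],[x₃,x₄]] ∈ M₂(ℂ) (so that ⁅H,X⁆ = 2·X). Then there exists Y ∈ M₄(ℂ) with ⁅H,Y⁆ = −2·Y and ⁅X,Y⁆ = H if and only if det A = x₁x₄ − x₂x₃ ≠ 0; when this holds, Y = [[0,0],[A⁻¹,0]] works, so that (X,Y,H) is an sl₂-triple (⁅X,Y⁆ = H, ⁅H,X⁆ = 2X, ⁅H,Y⁆ = −2Y). This is the condition for X to lie in the nilpotent orbit (2²) of SL(4). -/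
/-!
In `2 × 2` blocks the upper left corner of `⁅X, Z⁆ = H` reads `A * C = 1`, where `C` is the lower
left block of `Z`; taking determinants gives `det A * det C = 1`, so `det A ≠ 0`. Conversely, if
`det A ≠ 0` then `C = A⁻¹` (by Cramer's rule) solves both `A * C = 1` and `C * A = 1`, which is what
`⁅X, Y⁆ = H` says for `Y = [[0,0],[C,0]]`. The relations with `H` hold for every matrix of these block
shapes, since `ad H` has weight `2` on the upper right block and `-2` on the lower left one.
-/

open Matrix

/-- The semisimple element `H = diag(1,1,−1,−1)` attached to the nilpotent orbit `(2²)`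
of `SL(4)`. -/
noncomputable def H22 : Matrix (Fin 4) (Fin 4) ℂ := Matrix.diagonal ![1, 1, -1, -1]

/-- `ad H` scales the `(i, j)` entry by the difference of the `i`-th and `j`-th eigenvalues. -/
lemma lie_H22_apply (M : Matrix (Fin 4) (Fin 4) ℂ) (i j : Fin 4) :
    ⁅H22, M⁆ i j = (![1, 1, -1, -1] i - ![1, 1, -1, -1] j) * M i j := by
  rw [H22, Ring.lie_def, Matrix.sub_apply, Matrix.diagonal_mul, Matrix.mul_diagonal]
  ring

/-- For `H = diag(1,1,−1,−1)` and `X = [[0,A],[0,0]]` with `A = [[x₁,x₂],[x₃,x₄]]`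
(so that `⁅H,X⁆ = 2·X`), there exists `Y` with `⁅H,Y⁆ = −2·Y` and `⁅X,Y⁆ = H` iff
`det A = x₁x₄ − x₂x₃ ≠ 0`; and when this holds, `Y = [[0,0],[A⁻¹,0]]` works, so that
`(X,Y,H)` is an `sl₂`-triple.  This is the condition for `X` to lie in the nilpotent
orbit `(2²)` of `SL(4)`. -/
theorem sl4_orbit22_jacobson_morozov (x₁ x₂ x₃ x₄ : ℂ) :
    let X : Matrix (Fin 4) (Fin 4) ℂ :=
      !![0, 0, x₁, x₂; 0, 0, x₃, x₄; 0, 0, 0, 0; 0, 0, 0, 0]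
    let d : ℂ := x₁ * x₄ - x₂ * x₃
    let Y : Matrix (Fin 4) (Fin 4) ℂ :=
      !![0, 0, 0, 0; 0, 0, 0, 0; x₄ / d, -x₂ / d, 0, 0; -x₃ / d, x₁ / d, 0, 0]
    ⁅H22, X⁆ = (2 : ℂ) • X ∧
    ((∃ Z : Matrix (Fin 4) (Fin 4) ℂ,
        ⁅H22, Z⁆ = (-2 : ℂ) • Z ∧ ⁅X, Z⁆ = H22) ↔ d ≠ 0) ∧
    (d ≠ 0 →
      ⁅X, Y⁆ = H22 ∧ ⁅H22, X⁆ = (2 : ℂ) • X ∧ ⁅H22, Y⁆ = (-2 : ℂ) • Y) := by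
  intro X d Y
  have hX : ⁅H22, X⁆ = (2 : ℂ) • X := by
    ext i j
    fin_cases i <;> fin_cases j <;> norm_num [X, lie_H22_apply]
  have hY : ⁅H22, Y⁆ = (-2 : ℂ) • Y := by
    ext i j
    fin_cases i <;> fin_cases j <;> norm_num [Y, lie_H22_apply]
  have hXY (hd : d ≠ 0) : ⁅X, Y⁆ = H22 := by
    ext i j
    fin_cases i <;> fin_cases j <;>
      simp [X, Y, H22, Ring.lie_def] <;>
      field_simp <;> simp only [d] <;> ring
  refine ⟨hX, ⟨?_, fun hd => ⟨Y, hY, hXY hd⟩⟩, fun hd => ⟨hXY hd, hX, hY⟩⟩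
  rintro ⟨Z, -, hZ⟩ hd
  -- Three entries of `A * C = 1`; multiplied by `(A * C) 1 0`, the vanishing `(A * C) 0 1` already
  -- removes the off-diagonal term of `det (A * C)`.
  have h00 := congrFun (congrFun hZ 0) 0
  have h01 := congrFun (congrFun hZ 0) 1
  have h11 := congrFun (congrFun hZ 1) 1
  simp [X, H22, Ring.lie_def, Matrix.vecMul, Matrix.mul_apply, dotProduct, Fin.sum_univ_four]
    at h00 h01 h11
  have hdet : d * (Z 2 0 * Z 3 1 - Z 2 1 * Z 3 0) = 1 := by
    simp only [d]
    linear_combination (x₃ * Z 2 1 + x₄ * Z 3 1) * h00 + h11 - (x₃ * Z 2 0 + x₄ * Z 3 0) * h01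
  simp [hd] at hdet
end

section
/- Let φ : M₃(ℝ) → ℂ be continuous with φ(γ·g) = φ(g) for every g ∈ M₃(ℝ) and every integer 3×3 matrix γ of determinant 1, and let w be the integer matrix with rows (−1,0,0), (0,0,−1), (0,−1,0). Then for every integer m and every g ∈ M₃(ℝ): ∫₀¹∫₀¹∫₀¹ φ( n(0,x,0) · w · n(0,u₂,u₃) · g ) · e(−m·x) dx du₂ du₃ = ∫_{[0,1]³} φ( n(x₁,x₂,x₃) · g ) · e(−m·x₁) dx₁ dx₂ dx₃. (The Fourier coefficient attached to the minimal nilpotent orbit of SL(3), integrated over the remaining unipotent directions after translating by the Weyl element w, equals the degenerate Whittaker vector whose character is supported on the first simple root.) -/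
/-!
The Weyl element `w` is an involution conjugating the central one-parameter subgroup `n(0,x,0)`
into the simple root subgroup `n(x,0,0)`. Hence `n(0,x,0) w n(0,u₂,u₃) = w n(x, u₂ + x u₃, u₃)`,
and the factor `w` is absorbed by the `SL(3,ℤ)`-invariance (`phi_weyl`). For fixed `x` and `u₃` the
function `u₂ ↦ φ(n(x,u₂,u₃) g)` is `1`-periodic, because `n(0,1,0)` is integral (`phi_periodic`), so
the shift by `x u₃` does not affect its integral over a period. Fubini for continuous functions
(`interval_swap`) brings the `u₂`-integral to the inside and back.
-/

open MeasureTheory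

/-- `e(t) = exp(2πit)`. -/
noncomputable def e (t : ℝ) : ℂ := Complex.exp (2 * (Real.pi : ℂ) * Complex.I * (t : ℂ))

/-- The upper unitriangular `3×3` matrix with `(1,2)`-entry `x₁`, `(1,3)`-entry `x₂`
and `(2,3)`-entry `x₃`. -/
noncomputable def n (x₁ x₂ x₃ : ℝ) : Matrix (Fin 3) (Fin 3) ℝ :=
  !![1, x₁, x₂; 0, 1, x₃; 0, 0, 1]

/-- The Weyl element `w` as an integer matrix of determinant one. -/
def w : Matrix (Fin 3) (Fin 3) ℤ := !![-1, 0, 0; 0, 0, -1; 0, -1, 0]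

/-- Pushing `w` to the left turns the centre into the first simple root subgroup, at the cost of a
shear in the `(1,3)`-entry. -/
lemma n_mul_w_mul_n (x u₂ u₃ : ℝ) :
    n 0 x 0 * w.map (fun z => (z : ℝ)) * n 0 u₂ u₃ =
      w.map (fun z => (z : ℝ)) * n x (u₂ + x * u₃) u₃ := by
  ext i j
  fin_cases i <;> fin_cases j <;>
    simp [n, w, Matrix.mul_apply, Matrix.vecMul, dotProduct, Fin.sum_univ_three]
  ring

lemma det_w : w.det = 1 := by
  simp [w, Matrix.det_fin_three]

lemma phi_weyl (φ : Matrix (Fin 3) (Fin 3) ℝ → ℂ)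
    (hinv : ∀ γ : Matrix (Fin 3) (Fin 3) ℤ, γ.det = 1 →
      ∀ g : Matrix (Fin 3) (Fin 3) ℝ, φ (γ.map (fun z => (z : ℝ)) * g) = φ g)
    (g : Matrix (Fin 3) (Fin 3) ℝ) (x u₂ u₃ : ℝ) :
    φ (n 0 x 0 * w.map (fun z => (z : ℝ)) * n 0 u₂ u₃ * g) =
      φ (n x (u₂ + x * u₃) u₃ * g) := by
  rw [n_mul_w_mul_n, Matrix.mul_assoc, hinv w det_w]

lemma phi_periodic (φ : Matrix (Fin 3) (Fin 3) ℝ → ℂ)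
    (hinv : ∀ γ : Matrix (Fin 3) (Fin 3) ℤ, γ.det = 1 →
      ∀ g : Matrix (Fin 3) (Fin 3) ℝ, φ (γ.map (fun z => (z : ℝ)) * g) = φ g)
    (g : Matrix (Fin 3) (Fin 3) ℝ) (x₁ x₃ : ℝ) :
    Function.Periodic (fun x₂ => φ (n x₁ x₂ x₃ * g)) 1 := by
  intro x₂
  have h : n x₁ (x₂ + 1) x₃ =
      (!![1, 0, 1; 0, 1, 0; 0, 0, 1] : Matrix (Fin 3) (Fin 3) ℤ).map (fun z => (z : ℝ)) *
        n x₁ x₂ x₃ := by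
    ext i j
    fin_cases i <;> fin_cases j <;> simp [n, Matrix.mul_apply, Fin.sum_univ_three]
  simp only [h, Matrix.mul_assoc]
  exact hinv _ (by simp [Matrix.det_fin_three]) _

lemma continuous_n {X : Type*} [TopologicalSpace X] {a b c : X → ℝ}
    (ha : Continuous a) (hb : Continuous b) (hc : Continuous c) :
    Continuous fun t => n (a t) (b t) (c t) := by
  refine continuous_matrix fun i j => ?_
  fin_cases i <;> fin_cases j <;> simp [n] <;> fun_prop

lemma continuous_e : Continuous e := by
  unfold e
  fun_prop

lemma interval_swap (f : ℝ → ℝ → ℂ) (hf : Continuous (Function.uncurry f)) :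
    (∫ y in (0:ℝ)..1, ∫ x in (0:ℝ)..1, f x y) = ∫ x in (0:ℝ)..1, ∫ y in (0:ℝ)..1, f x y := by
  simp only [intervalIntegral.integral_of_le zero_le_one]
  refine MeasureTheory.integral_integral_swap (f := fun y x => f x y) ?_
  rw [Measure.prod_restrict]
  have hc : Continuous (Function.uncurry fun y x => f x y) := hf.comp continuous_swap
  exact (hc.continuousOn.integrableOn_compact (isCompact_Icc.prod isCompact_Icc)).mono_set
    (Set.prod_mono Set.Ioc_subset_Icc_self Set.Ioc_subset_Icc_self)

/-- The minimal-orbit Fourier coefficient of an `SL(3,ℤ)`-invariant function, translated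
by the Weyl element `w` and integrated over the remaining unipotent directions, equals the
degenerate Whittaker vector whose character is supported on the first simple root. -/
theorem sl3_min_orbit_gives_first_whittaker
    (φ : Matrix (Fin 3) (Fin 3) ℝ → ℂ) (hcont : Continuous φ)
    (hinv : ∀ γ : Matrix (Fin 3) (Fin 3) ℤ, γ.det = 1 →
      ∀ g : Matrix (Fin 3) (Fin 3) ℝ, φ (γ.map (fun z => (z : ℝ)) * g) = φ g)
    (m : ℤ) (g : Matrix (Fin 3) (Fin 3) ℝ) :
    (∫ u₃ in (0:ℝ)..1, ∫ u₂ in (0:ℝ)..1, ∫ x in (0:ℝ)..1,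
        φ (n 0 x 0 * w.map (fun z => (z : ℝ)) * n 0 u₂ u₃ * g) * e (-(m : ℝ) * x)) =
      ∫ x₃ in (0:ℝ)..1, ∫ x₂ in (0:ℝ)..1, ∫ x₁ in (0:ℝ)..1,
        φ (n x₁ x₂ x₃ * g) * e (-(m : ℝ) * x₁) := by
  refine intervalIntegral.integral_congr fun u₃ _ => ?_
  simp only [phi_weyl φ hinv g]
  rw [interval_swap (fun x u₂ => φ (n x (u₂ + x * u₃) u₃ * g) * e (-(m : ℝ) * x)),
    interval_swap (fun x u₂ => φ (n x u₂ u₃ * g) * e (-(m : ℝ) * x))]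
  · refine intervalIntegral.integral_congr fun x _ => ?_
    simp only [intervalIntegral.integral_mul_const]
    congr 1
    rw [intervalIntegral.integral_comp_add_right (fun t => φ (n x t u₃ * g)) (x * u₃)]
    -- Both sides are integrals over a full period.
    have h := (phi_periodic φ hinv g x u₃).intervalIntegral_add_eq (x * u₃) 0
    simpa [add_comm] using h
  · refine (hcont.comp ((continuous_n ?_ ?_ ?_).mul continuous_const)).mul
      (continuous_e.comp ?_) <;> fun_prop
  · refine (hcont.comp ((continuous_n ?_ ?_ ?_).mul continuous_const)).mul
      (continuous_e.comp ?_) <;> fun_prop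
end

section
/- Let φ : M₃(ℝ) → ℂ be continuous with φ(γ·g) = φ(g) for every g ∈ M₃(ℝ) and every integer 3×3 matrix γ of determinant 1, and let w′ be the integer matrix with rows (0,−1,0), (−1,0,0), (0,0,−1). Then for every integer m and every g ∈ M₃(ℝ): ∫₀¹∫₀¹∫₀¹ φ( n(0,x,0) · w′ · n(u₁,u₂,0) · g ) · e(−m·x) dx du₁ du₂ = ∫_{[0,1]³} φ( n(x₁,x₂,x₃) · g ) · e(−m·x₃) dx₁ dx₂ dx₃. (The minimal-orbit Fourier coefficient, translated by the Weyl element w′ and integrated over the remaining unipotent directions, equals the degenerate Whittaker vector whose character is supported on the second simple root.) -/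
/-!
Conjugation by `w'` carries the root space of the `(1,3)`-entry to that of the `(2,3)`-entry,
with sign `+`, so `n(0,x,0) w' n(u₁,u₂,0) = w' n(u₁,u₂,x)`. Invariance of `φ` under `w'` then
identifies the two integrands, and only the order of integration differs; Fubini applies since
the integrand is continuous on a compact cube.
-/

open MeasureTheory

/-- The Weyl element `w′` as an integer matrix of determinant one. -/
def w' : Matrix (Fin 3) (Fin 3) ℤ := !![0, -1, 0; -1, 0, 0; 0, 0, -1]

lemma swap_unit (f : ℝ → ℝ → ℂ) (hf : Continuous (Function.uncurry f)) :
    (∫ s in (0:ℝ)..1, ∫ t in (0:ℝ)..1, f s t) = ∫ t in (0:ℝ)..1, ∫ s in (0:ℝ)..1, f s t := by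
  simp only [intervalIntegral.integral_of_le zero_le_one]
  refine integral_integral_swap ?_
  rw [Measure.prod_restrict, ← Measure.volume_eq_prod]
  exact (hf.continuousOn.integrableOn_compact (isCompact_Icc.prod isCompact_Icc)).mono_set
    (Set.prod_mono Set.Ioc_subset_Icc_self Set.Ioc_subset_Icc_self)

lemma swap_cube (F : ℝ → ℝ → ℝ → ℂ)
    (hF : Continuous fun p : ℝ × ℝ × ℝ => F p.1 p.2.1 p.2.2) :
    (∫ b in (0:ℝ)..1, ∫ a in (0:ℝ)..1, ∫ c in (0:ℝ)..1, F a b c) =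
      ∫ c in (0:ℝ)..1, ∫ b in (0:ℝ)..1, ∫ a in (0:ℝ)..1, F a b c := by
  have h (b : ℝ) : (∫ a in (0:ℝ)..1, ∫ c in (0:ℝ)..1, F a b c) =
      ∫ c in (0:ℝ)..1, ∫ a in (0:ℝ)..1, F a b c :=
    swap_unit (fun a c => F a b c)
      (hF.comp (by fun_prop : Continuous fun q : ℝ × ℝ => (q.1, b, q.2)))
  simp only [h]
  refine swap_unit (fun b c => ∫ a in (0:ℝ)..1, F a b c) ?_
  exact intervalIntegral.continuous_parametric_intervalIntegral_of_continuous'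
    (f := fun (q : ℝ × ℝ) a => F a q.1 q.2)
    (hF.comp (by fun_prop : Continuous fun r : (ℝ × ℝ) × ℝ => (r.2, r.1.1, r.1.2))) 0 1

lemma n_mul_w' (x u₁ u₂ : ℝ) :
    n 0 x 0 * w'.map (fun z => (z : ℝ)) * n u₁ u₂ 0 =
      w'.map (fun z => (z : ℝ)) * n u₁ u₂ x := by
  ext i j
  fin_cases i <;> fin_cases j <;> simp [n, w', Matrix.mul_apply, Fin.sum_univ_three, Matrix.vecMul,
    dotProduct]

lemma w'_det : w'.det = 1 := by
  simp [w', Matrix.det_fin_three]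

/-- The minimal-orbit Fourier coefficient of an `SL(3,ℤ)`-invariant function, translated
by the Weyl element `w′` and integrated over the remaining unipotent directions, equals
the degenerate Whittaker vector whose character is supported on the second simple root. -/
theorem sl3_min_orbit_gives_second_whittaker
    (φ : Matrix (Fin 3) (Fin 3) ℝ → ℂ) (hcont : Continuous φ)
    (hinv : ∀ γ : Matrix (Fin 3) (Fin 3) ℤ, γ.det = 1 →
      ∀ g : Matrix (Fin 3) (Fin 3) ℝ, φ (γ.map (fun z => (z : ℝ)) * g) = φ g)
    (m : ℤ) (g : Matrix (Fin 3) (Fin 3) ℝ) :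
    (∫ u₂ in (0:ℝ)..1, ∫ u₁ in (0:ℝ)..1, ∫ x in (0:ℝ)..1,
        φ (n 0 x 0 * w'.map (fun z => (z : ℝ)) * n u₁ u₂ 0 * g) * e (-(m : ℝ) * x)) =
      ∫ x₃ in (0:ℝ)..1, ∫ x₂ in (0:ℝ)..1, ∫ x₁ in (0:ℝ)..1,
        φ (n x₁ x₂ x₃ * g) * e (-(m : ℝ) * x₃) := by
  simp only [n_mul_w', Matrix.mul_assoc (w'.map _), hinv w' w'_det]
  have hF : Continuous fun p : ℝ × ℝ × ℝ =>
      φ (n p.1 p.2.1 p.2.2 * g) * e (-(m : ℝ) * p.2.2) := by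
    have hn : Continuous fun p : ℝ × ℝ × ℝ => n p.1 p.2.1 p.2.2 := by
      refine continuous_matrix fun i j => ?_
      fin_cases i <;> fin_cases j <;> simp [n] <;> fun_prop
    have he : Continuous e := by unfold e; fun_prop
    fun_prop
  exact swap_cube (fun a b c => φ (n a b c * g) * e (-(m : ℝ) * c)) hF
end
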